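/- Theorem 2: For the quaternary sequences u₁ = φ[s₁, s₂], u₉ = φ[s₁+1, s₂], u₁₁ = φ[s₂+1, s₄] of period p, the 4-adic complexity satisfies Φ₄(u_i) ≥ ⌊log₄((4^p − 1)/(3(1+2p)) + 1)⌋ for i = 1, 9, 11. -/

import Mathlib

open Finset

/-- The cyclotomic class `D_i` of order 4 modulo `p` with respect to the
primitive root `θ`: `{θ^(i+4j) mod p : 0 ≤ j < (p-1)/4}`. -/
def cycD (p θ i : ℕ) : Finset ℕ :=
  (Finset.range ((p - 1) / 4)).image fun j => θ ^ (i + 4 * j) % p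

/-- The binary sequence `s₁` with support set `D₀ ∪ D₁`. -/
def seqS1 (p θ : ℕ) (t : ℕ) : ℕ := if t ∈ cycD p θ 0 ∪ cycD p θ 1 then 1 else 0

/-- The binary sequence `s₂` with support set `D₀ ∪ D₃`. -/
def seqS2 (p θ : ℕ) (t : ℕ) : ℕ := if t ∈ cycD p θ 0 ∪ cycD p θ 3 then 1 else 0

/-- The binary sequence `s₃` with support set `D₁ ∪ D₂`. -/
def seqS3 (p θ : ℕ) (t : ℕ) : ℕ := if t ∈ cycD p θ 1 ∪ cycD p θ 2 then 1 else 0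

/-- The binary sequence `s₄` with support set `D₂ ∪ D₃`. -/
def seqS4 (p θ : ℕ) (t : ℕ) : ℕ := if t ∈ cycD p θ 2 ∪ cycD p θ 3 then 1 else 0

/-- The bitwise complement `s + 1` of a binary sequence. -/
def seqCompl (s : ℕ → ℕ) (t : ℕ) : ℕ := 1 - s t

/-- The inverse Gray mapping: `φ[0,0]=0, φ[0,1]=1, φ[1,1]=2, φ[1,0]=3`. -/
def gray (a b : ℕ) : ℕ := if a = 0 then b else 3 - b

/-- The quaternary sequence `φ[r,s] : t ↦ φ[r(t), s(t)]`. -/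
def graySeq (r s : ℕ → ℕ) (t : ℕ) : ℕ := gray (r t) (s t)

/-- The generating value `U(4) = Σ_{t=0}^{p-1} u(t)·4^t` of a quaternary
sequence `u` of period `p`. -/
def seqVal (p : ℕ) (u : ℕ → ℕ) : ℕ := ∑ t ∈ Finset.range p, u t * 4 ^ t

/-- The 4-adic complexity `Φ₄(u) = ⌊log₄((4^p − 1)/gcd(4^p − 1, U(4)) + 1)⌋`
of a quaternary sequence `u` of period `p`. -/
noncomputable def adicComplexity4 (p : ℕ) (u : ℕ → ℕ) : ℤ :=
  ⌊Real.logb 4 (((4 ^ p - 1 : ℕ) : ℝ) / ((Nat.gcd (4 ^ p - 1) (seqVal p u) : ℕ) : ℝ) + 1)⌋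

/-!
Let `M = 1 + 4 + ⋯ + 4 ^ (p - 1)`, so that `4 ^ p - 1 = 3 * M`; it suffices to bound
`d = gcd(M, U(4))` by `1 + 2 * p`. Complementing the first binary sequence replaces `U(4)` by
`3 * M - U(4)`, which does not change `d`. In terms of the Gauss sums of a quartic character modulo
`p`, the value at a primitive `p`-th root of unity `ζ` of the polynomial `U` of the sequence
satisfies `2 * U(ζ) = -3 + 2 * T - S` with `S ^ 2 = p` and `T ^ 2 = -p + 2 * y * S`, where
`p = α ^ 2 + 4 * y ^ 2`. Since the `p`-th cyclotomic polynomial takes the value `M` at `4`, the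
number `d` divides the norm `N = (9 + 5 * p) ^ 2 - (6 - 8 * y) ^ 2 * p` of `2 * U(ζ)`. On the other
hand every divisor of `M` is `1` modulo `2 * p`. Writing `d = 1 + 2 * k * p`, the size of `N / d`
and its residue modulo `8` leave only `k ≤ 4`, and `k = 2, 3, 4` are excluded one by one.
-/

section GeomSum

variable {p b q d : ℕ}

lemma three_mul_geomSum_four (n : ℕ) : 3 * ∑ i ∈ range n, 4 ^ i = 4 ^ n - 1 := by
  have h := geom_sum_mul_add 3 n
  norm_num at h
  omega

lemma orderOf_natCast_of_dvd_geomSum (hp : p.Prime) (hb : (b : ZMod p) ≠ 1) (hq : q.Prime)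
    (hd : q ∣ ∑ i ∈ range p, b ^ i) : orderOf (b : ZMod q) = p := by
  have := Fact.mk hp
  have := Fact.mk hq
  have hsum : ∑ i ∈ range p, (b : ZMod q) ^ i = 0 := by
    exact_mod_cast (ZMod.natCast_eq_zero_iff _ q).2 hd
  refine orderOf_eq_prime (sub_eq_zero.1 ?_) fun hb1 => hb ?_
  · rw [← geom_sum_mul, hsum, zero_mul]
  · have hqp : q ∣ p := by simpa [hb1, ZMod.natCast_eq_zero_iff] using hsum
    obtain rfl := (Nat.prime_dvd_prime_iff_eq hq hp).1 hqp
    exact hb1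

lemma modEq_one_of_dvd_geomSum (hp : p.Prime) (hp2 : p ≠ 2) (hb : (b : ZMod p) ≠ 1)
    (hd : d ∣ ∑ i ∈ range p, b ^ i) : d ≡ 1 [MOD 2 * p] := by
  induction d using Nat.recOnMul with
  | zero =>
    obtain ⟨n, rfl⟩ := Nat.exists_eq_add_one_of_ne_zero hp.ne_zero
    simp [zero_dvd_iff, sum_range_succ'] at hd
  | one => rfl
  | prime q hq =>
    have := Fact.mk hq
    have hord := orderOf_natCast_of_dvd_geomSum hp hb hq hd
    have hpq : p ∣ q - 1 := hord ▸ ZMod.orderOf_dvd_card_sub_one fun h0 => by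
      rw [h0, orderOf_zero] at hord
      exact hp.ne_zero hord.symm
    have hq2 : q ≠ 2 := by
      rintro rfl
      exact hp.one_lt.ne' (Nat.dvd_one.1 hpq)
    have h2q : 2 ∣ q - 1 := (hq.even_sub_one hq2).two_dvd
    have h2p : Nat.Coprime 2 p := (Nat.coprime_primes Nat.prime_two hp).2 hp2.symm
    exact ((Nat.modEq_iff_dvd' hq.one_lt.le).2 (h2p.mul_dvd_of_dvd_of_dvd h2q hpq)).symm
  | mul m n hm hn =>
    simpa using (hm (dvd_of_mul_right_dvd hd)).mul (hn (dvd_of_mul_left_dvd hd))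

lemma natCast_four_ne_one (hp : p.Prime) (hp3 : p ≠ 3) : ((4 : ℕ) : ZMod p) ≠ 1 := by
  intro h
  have h3 : ((3 : ℕ) : ZMod p) = 0 := by
    push_cast at h ⊢
    linear_combination h
  have hdvd := (ZMod.natCast_eq_zero_iff 3 p).1 h3
  exact hp3 ((Nat.prime_dvd_prime_iff_eq hp Nat.prime_three).1 hdvd)

/- Such a divisor would be a prime `q ≡ 5 [MOD 8]` for which `2 ^ ((q - 1) / 2) = 4 ^ p = 1`,
although `2` is not a square modulo `q`. -/
lemma four_mul_add_one_not_dvd_geomSum_four (hp : p.Prime) (hp2 : p ≠ 2) (hp3 : p ≠ 3) :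
    ¬ 4 * p + 1 ∣ ∑ i ∈ range p, 4 ^ i := by
  intro hd
  have h4 := natCast_four_ne_one hp hp3
  have hp_odd := hp.eq_two_or_odd.resolve_left hp2
  obtain ⟨q, hq, hqd⟩ := Nat.exists_prime_and_dvd (show 4 * p + 1 ≠ 1 by have := hp.pos; omega)
  have hq_lt : 2 * p < q := by
    have h1 := (Nat.modEq_iff_dvd' hq.one_lt.le).1
      (modEq_one_of_dvd_geomSum hp hp2 h4 (hqd.trans hd)).symm
    have := Nat.le_of_dvd (Nat.sub_pos_of_lt hq.one_lt) h1
    omega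
  obtain rfl : q = 4 * p + 1 := by
    obtain ⟨c, hc⟩ := hqd
    have hc2 : c < 2 := by nlinarith
    interval_cases c <;> omega
  have := Fact.mk hq
  have h4p : (4 : ZMod (4 * p + 1)) ^ p = 1 := by
    have h := pow_orderOf_eq_one ((4 : ℕ) : ZMod (4 * p + 1))
    rw [orderOf_natCast_of_dvd_geomSum hp h4 hq hd] at h
    exact_mod_cast h
  have h2 : (2 : ZMod (4 * p + 1)) ≠ 0 := by
    have := (ZMod.natCast_eq_zero_iff 2 (4 * p + 1)).not.2
      (Nat.not_dvd_of_pos_of_lt two_pos (by omega))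
    exact_mod_cast this
  have hsq : IsSquare (2 : ZMod (4 * p + 1)) := by
    rw [ZMod.euler_criterion _ h2, show (4 * p + 1) / 2 = 2 * p by omega, pow_mul, ← h4p]
    norm_num
  rw [ZMod.exists_sq_eq_two_iff (by omega)] at hsq
  omega

end GeomSum

section QuarticNorm

variable {p d : ℕ} {α y : ℤ}

/-- The norm to `ℚ` of the element `-3 + 2 * T - S` of the quartic subfield of the `p`-th
cyclotomic field, where `S ^ 2 = p` and `T ^ 2 = -p + 2 * y * S`. -/
def quarticNorm (p y : ℤ) : ℤ := (9 + 5 * p) ^ 2 - (6 - 8 * y) ^ 2 * p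

/-- Comparing `d * E = quarticNorm p y` modulo `p` gives `E = 81 + m * p`. -/
lemma exists_cofactor_of_dvd_quarticNorm {p k : ℤ} (hp : p ≠ 0)
    (h : 1 + 2 * k * p ∣ quarticNorm p y) :
    ∃ m, m * (1 + 2 * k * p) + 162 * k = 54 + 25 * p + 96 * y - 64 * y ^ 2 := by
  obtain ⟨E, hE⟩ := h
  refine ⟨54 + 25 * p + 96 * y - 64 * y ^ 2 - 2 * k * E, mul_left_cancel₀ hp ?_⟩
  unfold quarticNorm at hE
  linear_combination 2 * k * p * hE

lemma cofactor_modEq_three {p k m : ℤ} (hp8 : p % 8 = 5)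
    (h : m * (1 + 2 * k * p) + 162 * k = 54 + 25 * p + 96 * y - 64 * y ^ 2) :
    m ≡ 3 [ZMOD 8] := by
  have hp : ((p : ℤ) : ZMod 8) = 5 := (ZMod.intCast_eq_intCast_iff p 5 8).2 hp8
  have h8 := congrArg (Int.cast : ℤ → ZMod 8) h
  push_cast [hp] at h8
  refine (ZMod.intCast_eq_intCast_iff m 3 8).1 ?_
  push_cast
  generalize (m : ZMod 8) = a, (k : ZMod 8) = b, (y : ZMod 8) = c at h8 ⊢
  revert a b c
  decide

lemma cofactor_eq_three {p k m : ℤ} (hp8 : p % 8 = 5) (hp : 29 ≤ p) (hαy : α ^ 2 + 4 * y ^ 2 = p)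
    (hk : 2 ≤ k) (h : m * (1 + 2 * k * p) + 162 * k = 54 + 25 * p + 96 * y - 64 * y ^ 2) :
    m = 3 ∧ k ≤ 4 := by
  have hm8 : m % 8 = 3 := cofactor_modEq_three hp8 h
  have h_pos : 0 < 54 + 25 * p + 96 * y - 64 * y ^ 2 := by
    nlinarith [sq_nonneg (3 * y + 8), sq_nonneg α]
  have h_le : 54 + 25 * p + 96 * y - 64 * y ^ 2 ≤ 90 + 25 * p := by
    nlinarith [sq_nonneg (4 * y - 3)]
  have hkp : 2 * p ≤ k * p := by nlinarith
  have hm_gt : -5 < m := by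
    by_contra! hm
    nlinarith
  have hm_lt : m < 11 := by
    by_contra! hm
    nlinarith
  obtain rfl : m = 3 := by omega
  refine ⟨rfl, ?_⟩
  by_contra! hk5
  nlinarith

lemma seven_dvd_of_cofactor {p : ℤ}
    (h : 3 * (1 + 2 * 3 * p) + 162 * 3 = 54 + 25 * p + 96 * y - 64 * y ^ 2) :
    7 ∣ 1 + 2 * 3 * p := by
  have hp : 7 * p = (8 * y - 6) ^ 2 + 7 * 57 := by linear_combination -h
  have h7 : (7 : ℤ) ∣ (8 * y - 6) ^ 2 := ⟨p - 57, by linear_combination -hp⟩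
  obtain ⟨c, hc⟩ := (show Prime (7 : ℤ) by norm_num).dvd_of_dvd_pow h7
  rw [hc] at hp
  exact ⟨49 + 6 * c ^ 2, by linarith⟩

lemma not_cofactor_four {p : ℤ} (hαy : α ^ 2 + 4 * y ^ 2 = p) :
    3 * (1 + 2 * 4 * p) + 162 * 4 ≠ 54 + 25 * p + 96 * y - 64 * y ^ 2 := by
  intro h
  have hα : α ^ 2 = 60 * y ^ 2 - 96 * y + 597 := by linear_combination hαy - h
  have h9 := congrArg (Int.cast : ℤ → ZMod 9) hα
  push_cast at h9
  generalize (α : ZMod 9) = a, (y : ZMod 9) = b at h9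
  revert a b
  decide

lemma ne_zero_of_sq_add_four_mul_sq {p : ℤ} (hp8 : p % 8 = 5) (hαy : α ^ 2 + 4 * y ^ 2 = p) :
    y ≠ 0 := by
  rintro rfl
  have hα : α ^ 2 ≡ 5 [ZMOD 8] := by rw [Int.ModEq]; omega
  have h8 := (ZMod.intCast_eq_intCast_iff _ _ 8).2 hα
  push_cast at h8
  generalize (α : ZMod 8) = a at h8
  revert a
  decide

lemma le_of_dvd_quarticNorm_of_lt (hp : p < 16) (hp8 : p % 8 = 5)
    (hαy : α ^ 2 + 4 * y ^ 2 = p) (hd : d ∣ ∑ i ∈ range p, 4 ^ i)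
    (hN : (d : ℤ) ∣ quarticNorm p y) : d ≤ 1 + 2 * p := by
  have hy0 : y ≠ 0 := ne_zero_of_sq_add_four_mul_sq (by omega) hαy
  have hy : -2 < y ∧ y < 2 := abs_lt.1 (abs_lt_of_sq_lt_sq (by nlinarith [sq_nonneg α]) two_pos.le)
  have hgcd := Nat.dvd_gcd hd (Int.natCast_dvd.1 hN)
  obtain ⟨hy1, hy2⟩ := hy
  obtain rfl | rfl : p = 5 ∨ p = 13 := by omega
  all_goals
    interval_cases y
    · exact (Nat.le_of_dvd (by decide) hgcd).trans (by decide)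
    · contradiction
    · exact (Nat.le_of_dvd (by decide) hgcd).trans (by decide)

theorem le_of_dvd_geomSum_of_dvd_quarticNorm (hp : p.Prime) (hp8 : p % 8 = 5)
    (hαy : α ^ 2 + 4 * y ^ 2 = p) (hd : d ∣ ∑ i ∈ range p, 4 ^ i)
    (hN : (d : ℤ) ∣ quarticNorm p y) : d ≤ 1 + 2 * p := by
  rcases lt_or_ge p 16 with hp16 | hp16
  · exact le_of_dvd_quarticNorm_of_lt hp16 hp8 hαy hd hN
  have hp29 : 29 ≤ p := by
    by_contra! hlt
    obtain rfl : p = 21 := by omega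
    norm_num at hp
  have h4 := natCast_four_ne_one hp (by omega)
  have hdmod := modEq_one_of_dvd_geomSum hp (by omega) h4 hd
  by_contra! hlt
  obtain ⟨k, hk⟩ := (Nat.modEq_iff_dvd' (by omega)).1 hdmod.symm
  obtain rfl : d = 1 + 2 * k * p := by rw [mul_right_comm, ← hk]; omega
  have hk2 : 2 ≤ k := by
    by_contra! hk1
    interval_cases k <;> omega
  push_cast at hN
  obtain ⟨m, hm⟩ := exists_cofactor_of_dvd_quarticNorm (by omega) hN
  obtain ⟨rfl, hk4⟩ := cofactor_eq_three (by omega) (by omega) hαy (by omega) hm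
  obtain rfl | rfl | rfl : k = 2 ∨ k = 3 ∨ k = 4 := by omega
  · have h4p : 4 * p + 1 ∣ ∑ i ∈ range p, 4 ^ i := by convert hd using 1; ring
    exact four_mul_add_one_not_dvd_geomSum_four hp (by omega) (by omega) h4p
  · have h7 : 7 ∣ 1 + 2 * 3 * p := by exact_mod_cast seven_dvd_of_cofactor hm
    have := modEq_one_of_dvd_geomSum hp (by omega) h4 (h7.trans hd)
    rw [Nat.ModEq, Nat.mod_eq_of_lt (by omega), Nat.mod_eq_of_lt (by omega)] at this
    omega
  · exact not_cofactor_four hαy hm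

end QuarticNorm

section HalfSequences

variable {p θ : ℕ}

/-- The binary sequence with support set `D_i ∪ D_{i+1}`, the indices being read modulo `4`
(see `cycD_congr`); the sequences `s₁`, `s₃`, `s₄` and `s₂` are the cases `i = 0, 1, 2, 3`. -/
def halfSeq (p θ i t : ℕ) : ℕ := if t ∈ cycD p θ i ∪ cycD p θ (i + 1) then 1 else 0

/-- The `±1`-valued form `2 * s - 1` of `s = halfSeq p θ i`, set to `0` at `t = 0` so that it is a
combination of multiplicative characters modulo `p`. -/
def halfSign (p θ i t : ℕ) : ℤ := if t = 0 then 0 else 2 * halfSeq p θ i t - 1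

@[simp] lemma halfSign_zero (i : ℕ) : halfSign p θ i 0 = 0 := rfl

lemma graySeq_seqCompl_halfSeq_add_graySeq (i j t : ℕ) :
    graySeq (seqCompl (halfSeq p θ i)) (halfSeq p θ j) t
      + graySeq (halfSeq p θ i) (halfSeq p θ j) t = 3 := by
  simp only [graySeq, gray, seqCompl, halfSeq]
  split_ifs <;> simp_all

variable [Fact p.Prime]

lemma natCast_ne_zero_of_isPrimitiveRoot (hθ : IsPrimitiveRoot (θ : ZMod p) (p - 1)) :
    (θ : ZMod p) ≠ 0 :=
  (hθ.isUnit (Nat.sub_pos_of_lt (Fact.out : p.Prime).one_lt).ne').ne_zero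

lemma pow_mod_ne_zero (hθ : IsPrimitiveRoot (θ : ZMod p) (p - 1)) (n : ℕ) : θ ^ n % p ≠ 0 := by
  intro h
  have h0 := (ZMod.natCast_eq_zero_iff (θ ^ n) p).2 (Nat.dvd_of_mod_eq_zero h)
  push_cast at h0
  exact pow_ne_zero n (natCast_ne_zero_of_isPrimitiveRoot hθ) h0

lemma exists_pow_mod_eq (hθ : IsPrimitiveRoot (θ : ZMod p) (p - 1)) {t : ℕ} (ht0 : t ≠ 0)
    (ht : t < p) : ∃ n, θ ^ n % p = t := by
  have : NeZero (p - 1) := ⟨by omega⟩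
  have ht_unit : (t : ZMod p) ≠ 0 :=
    (ZMod.natCast_eq_zero_iff t p).not.2 (Nat.not_dvd_of_pos_of_lt (Nat.pos_of_ne_zero ht0) ht)
  obtain ⟨n, -, hn⟩ := hθ.eq_pow_of_pow_eq_one (ZMod.pow_card_sub_one_eq_one ht_unit)
  refine ⟨n, ?_⟩
  rw [← Nat.mod_eq_of_lt ht]
  exact (ZMod.natCast_eq_natCast_iff' _ _ p).1 (by exact_mod_cast hn)

lemma pow_mod_eq_pow_mod_iff (hθ : IsPrimitiveRoot (θ : ZMod p) (p - 1)) {m n : ℕ} :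
    θ ^ m % p = θ ^ n % p ↔ m ≡ n [MOD p - 1] := by
  have hp1 : p - 1 ≠ 0 := (Nat.sub_pos_of_lt (Fact.out : p.Prime).one_lt).ne'
  rw [← ZMod.natCast_eq_natCast_iff', Nat.cast_pow, Nat.cast_pow,
    (hθ.isOfFinOrder hp1).pow_eq_pow_iff_modEq, ← hθ.eq_orderOf]

lemma pow_mod_mem_cycD_iff (hθ : IsPrimitiveRoot (θ : ZMod p) (p - 1)) (h4 : 4 ∣ p - 1)
    {n i : ℕ} : θ ^ n % p ∈ cycD p θ i ↔ n ≡ i [MOD 4] := by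
  simp only [cycD, mem_image, mem_range, pow_mod_eq_pow_mod_iff hθ]
  obtain ⟨m, hm⟩ := h4
  have hm_pos : 0 < m := by have := (Fact.out : p.Prime).one_lt; omega
  rw [hm, Nat.mul_div_cancel_left m four_pos]
  constructor
  · rintro ⟨j, -, hj⟩
    have := hj.of_mul_right m
    rw [Nat.ModEq] at this ⊢
    omega
  · intro hn
    have hle : i ≤ n + 4 * m * i := by nlinarith
    obtain ⟨c, hc⟩ : 4 ∣ n + 4 * m * i - i :=
      (Nat.modEq_iff_dvd' hle).1 (by rw [Nat.ModEq, mul_assoc] at *; omega)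
    refine ⟨c % m, Nat.mod_lt c hm_pos, ?_⟩
    calc i + 4 * (c % m) ≡ i + 4 * c [MOD 4 * m] := ((Nat.mod_modEq c m).mul_left' 4).add_left i
      _ = n + 4 * m * i := by omega
      _ ≡ n [MOD 4 * m] := by simp [Nat.ModEq]

lemma zero_notMem_cycD (hθ : IsPrimitiveRoot (θ : ZMod p) (p - 1)) (i : ℕ) :
    0 ∉ cycD p θ i := by
  simp [cycD, pow_mod_ne_zero hθ]

lemma cycD_congr (hθ : IsPrimitiveRoot (θ : ZMod p) (p - 1)) (h4 : 4 ∣ p - 1) {i j : ℕ}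
    (hij : i ≡ j [MOD 4]) : cycD p θ i = cycD p θ j := by
  have hsub : ∀ {i j : ℕ}, i ≡ j [MOD 4] → cycD p θ i ⊆ cycD p θ j := by
    intro i j hij t ht
    obtain ⟨k, -, rfl⟩ := mem_image.1 ht
    refine (pow_mod_mem_cycD_iff hθ h4).2 (Nat.ModEq.trans ?_ hij)
    simp [Nat.ModEq]
  exact (hsub hij).antisymm (hsub hij.symm)

lemma seqS2_eq_halfSeq (hθ : IsPrimitiveRoot (θ : ZMod p) (p - 1)) (h4 : 4 ∣ p - 1) :
    seqS2 p θ = halfSeq p θ 3 := by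
  funext t
  rw [seqS2, halfSeq, union_comm, cycD_congr hθ h4 (show 3 + 1 ≡ 0 [MOD 4] from rfl)]

lemma halfSign_pow_mod (hθ : IsPrimitiveRoot (θ : ZMod p) (p - 1)) (h4 : 4 ∣ p - 1) (i n : ℕ) :
    halfSign p θ i (θ ^ n % p) = if (n + 3 * i) % 4 < 2 then 1 else -1 := by
  have hmem (i : ℕ) : θ ^ n % p ∈ cycD p θ i ↔ (n + 3 * i) % 4 = 0 := by
    rw [pow_mod_mem_cycD_iff hθ h4, Nat.ModEq]
    omega
  simp only [halfSign, pow_mod_ne_zero hθ, if_false, halfSeq, mem_union, hmem]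
  split_ifs <;> omega

lemma exists_halfSign_mul_halfSign_pow_mod (hθ : IsPrimitiveRoot (θ : ZMod p) (p - 1))
    (h4 : 4 ∣ p - 1) {i j : ℕ} (hij : Odd (i + j)) :
    ∃ ε : ℤ, ε ^ 2 = 1 ∧
      ∀ n, halfSign p θ i (θ ^ n % p) * halfSign p θ j (θ ^ n % p) = ε * (-1) ^ n := by
  have hmul (a b : ℕ) (hab : Odd (a + b)) : ((if a % 4 < 2 then 1 else -1) : ℤ) *
      (if b % 4 < 2 then 1 else -1) = if (a + b) % 4 = 1 then 1 else -1 := by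
    rw [Nat.odd_iff] at hab
    split_ifs <;> omega
  have hodd (n : ℕ) : Odd (n + 3 * i + (n + 3 * j)) := by
    rw [Nat.odd_iff] at hij ⊢
    omega
  refine ⟨if (i + j) % 4 = 3 then 1 else -1, by split_ifs <;> rfl, fun n => ?_⟩
  rw [halfSign_pow_mod hθ h4, halfSign_pow_mod hθ h4, hmul _ _ (hodd n), neg_one_pow_eq_ite]
  rw [Nat.odd_iff] at hij
  simp only [Nat.even_iff]
  split_ifs <;> omega

lemma two_mul_graySeq_halfSeq (hθ : IsPrimitiveRoot (θ : ZMod p) (p - 1)) (i j t : ℕ) :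
    2 * (graySeq (halfSeq p θ i) (halfSeq p θ j) t : ℤ) =
      3 - 3 * (if t = 0 then 1 else 0) + 2 * halfSign p θ i t
        - halfSign p θ i t * halfSign p θ j t := by
  rcases eq_or_ne t 0 with rfl | ht
  · simp [graySeq, gray, halfSeq, zero_notMem_cycD hθ]
  · simp only [graySeq, gray, halfSign, halfSeq, ht, if_false]
    split_ifs <;> simp_all

end HalfSequences

section QuarticCharacters

lemma inv_sq_eq_sq_of_orderOf_eq_four {G : Type*} [Group G] {g : G} (hg : orderOf g = 4) :
    g⁻¹ ^ 2 = g ^ 2 := by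
  rw [inv_pow, inv_eq_iff_mul_eq_one, ← pow_add]
  exact orderOf_dvd_iff_pow_eq_one.1 hg.dvd

open Complex (I)

variable {F : Type*} [Field F] [Fintype F]

lemma exists_unit_of_isPrimitiveRoot {θ : F} (hθ : IsPrimitiveRoot θ (Fintype.card F - 1)) :
    ∃ u : Fˣ, (u : F) = θ ∧ ∀ x, x ∈ Subgroup.zpowers u := by
  classical
  obtain ⟨u, rfl⟩ := hθ.isUnit (Nat.sub_pos_of_lt Fintype.one_lt_card).ne'
  refine ⟨u, rfl, fun x => ?_⟩
  have htop : Subgroup.zpowers u = ⊤ := Subgroup.eq_top_of_card_eq _ <| by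
    rw [Nat.card_zpowers, ← (IsPrimitiveRoot.coe_units_iff.1 hθ).eq_orderOf,
      Nat.card_eq_fintype_card, Fintype.card_units]
  exact htop ▸ Subgroup.mem_top x

lemma exists_mulChar_apply_eq {R : Type*} [CommRing R] {θ : F}
    (hθ : IsPrimitiveRoot θ (Fintype.card F - 1)) {z : Rˣ} (hz : z ^ (Fintype.card F - 1) = 1) :
    ∃ χ : MulChar F R, χ θ = z := by
  classical
  obtain ⟨u, rfl, hu⟩ := exists_unit_of_isPrimitiveRoot hθ
  have hz' : z ∈ rootsOfUnity (Fintype.card Fˣ) R := by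
    rwa [mem_rootsOfUnity, Fintype.card_units]
  exact ⟨MulChar.ofRootOfUnity hz' hu, MulChar.ofRootOfUnity_spec hz' hu⟩

lemma orderOf_mulChar_eq_orderOf_apply {R : Type*} [CommRing R] {θ : F}
    (hθ : IsPrimitiveRoot θ (Fintype.card F - 1)) (χ : MulChar F R) :
    orderOf χ = orderOf (χ θ) := by
  obtain ⟨u, rfl, hu⟩ := exists_unit_of_isPrimitiveRoot hθ
  refine orderOf_eq_orderOf_iff.2 fun n => ?_
  rw [MulChar.eq_iff hu, MulChar.pow_apply_coe, MulChar.one_apply_coe]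

lemma orderOf_I : orderOf I = 4 := Complex.isPrimitiveRoot_I.eq_orderOf.symm

lemma exists_mulChar_apply_eq_I {θ : F} (hθ : IsPrimitiveRoot θ (Fintype.card F - 1))
    (h4 : 4 ∣ Fintype.card F - 1) : ∃ χ : MulChar F ℂ, χ θ = I := by
  have hI : (Units.mk0 I Complex.I_ne_zero) ^ (Fintype.card F - 1) = 1 := by
    ext
    push_cast [Units.val_mk0]
    exact orderOf_dvd_iff_pow_eq_one.1 (orderOf_I ▸ h4)
  exact exists_mulChar_apply_eq hθ hI

lemma mulChar_neg_one_of_apply_eq_I {θ : F} (hθ : IsPrimitiveRoot θ (Fintype.card F - 1))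
    (hF : Fintype.card F % 8 = 5) {χ : MulChar F ℂ} (hχ : χ θ = I) : χ (-1) = -1 := by
  have hsplit : Fintype.card F - 1 = (Fintype.card F - 1) / 2 * 2 := by omega
  have hneg : θ ^ ((Fintype.card F - 1) / 2) = -1 :=
    (hθ.pow (by omega) hsplit).eq_neg_one_of_two_right
  rw [← hneg, map_pow, hχ, Complex.I_pow_eq_pow_mod,
    show (Fintype.card F - 1) / 2 % 4 = 2 by omega, Complex.I_sq]

lemma gaussSum_mul_gaussSum_inv {R : Type*} [CommRing R] [IsDomain R] {χ : MulChar F R}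
    {ψ : AddChar F R} (hχ : χ ≠ 1) (hψ : ψ.IsPrimitive) :
    gaussSum χ ψ * gaussSum χ⁻¹ ψ = χ (-1) * Fintype.card F := by
  rw [← mul_gaussSum_inv_eq_gaussSum χ⁻¹ ψ, mul_left_comm, gaussSum_mul_gaussSum_eq_card hχ hψ,
    MulChar.inv_apply', inv_neg_one]

variable {χ : MulChar F ℂ} {ψ : AddChar F ℂ}

lemma gaussSum_sq_sq_of_orderOf_eq_four (hχ : orderOf χ = 4) (hψ : ψ.IsPrimitive) :
    gaussSum (χ ^ 2) ψ ^ 2 = Fintype.card F := by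
  have hquad : (χ ^ 2).IsQuadratic := by
    rw [MulChar.isQuadratic_iff_sq_eq_one, ← pow_mul]
    exact orderOf_dvd_iff_pow_eq_one.1 hχ.dvd
  have hneg : (χ ^ 2) (-1) = 1 := by
    rw [MulChar.pow_apply' χ two_ne_zero, ← map_pow, neg_one_sq, map_one]
  have h2 : χ ^ 2 ≠ 1 := pow_ne_one_of_lt_orderOf two_ne_zero (by omega)
  rw [gaussSum_sq h2 hquad hψ, hneg, one_mul]

lemma exists_eq_of_mem_adjoin_I {z : ℂ} (hz : z ∈ Algebra.adjoin ℤ {I}) :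
    ∃ m n : ℤ, z = m + n * I := by
  induction hz using Algebra.adjoin_induction with
  | mem x hx => exact ⟨0, 1, by simp [Set.mem_singleton_iff.1 hx]⟩
  | algebraMap r => exact ⟨r, 0, by simp⟩
  | add x y _ _ hx hy =>
    obtain ⟨m, n, rfl⟩ := hx
    obtain ⟨m', n', rfl⟩ := hy
    exact ⟨m + m', n + n', by push_cast; ring⟩
  | mul x y _ _ hx hy =>
    obtain ⟨m, n, rfl⟩ := hx
    obtain ⟨m', n', rfl⟩ := hy
    exact ⟨m * m' - n * n', m * n' + n * m', by
      push_cast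
      linear_combination n * n' * Complex.I_sq⟩

lemma jacobiSum_inv_inv (χ φ : MulChar F ℂ) : jacobiSum χ⁻¹ φ⁻¹ = star (jacobiSum χ φ) := by
  simp only [jacobiSum, star_sum, star_mul, MulChar.star_apply', mul_comm]

lemma exists_jacobiSum_eq_of_orderOf_eq_four (hχ : orderOf χ = 4) :
    ∃ α y : ℤ, jacobiSum χ χ = α + 2 * y * I ∧ α ^ 2 + 4 * y ^ 2 = Fintype.card F := by
  have h1 : χ ≠ 1 := orderOf_eq_one_iff.not.1 (by omega)
  have h2 : χ * χ ≠ 1 := sq χ ▸ pow_ne_one_of_lt_orderOf two_ne_zero (by omega)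
  have h4 : χ ^ 4 = 1 := orderOf_dvd_iff_pow_eq_one.1 hχ.dvd
  obtain ⟨z, hz, hJ⟩ := exists_jacobiSum_eq_neg_one_add (n := 4) (by norm_num) h4 h4
    (hχ ▸ χ.orderOf_dvd_card_sub_one) Complex.isPrimitiveRoot_I
  obtain ⟨m, n, rfl⟩ := exists_eq_of_mem_adjoin_I hz
  have hJ' : jacobiSum χ χ = ((2 * n - 1 : ℤ) : ℂ) + 2 * ((-m : ℤ) : ℂ) * I := by
    rw [hJ]
    push_cast
    linear_combination (m + n * I - 2 * n) * Complex.I_sq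
  refine ⟨2 * n - 1, -m, hJ', ?_⟩
  have hchar : ringChar ℂ ≠ ringChar F := by
    rw [ringChar.eq_zero]
    exact (CharP.ringChar_ne_zero_of_finite F).symm
  have hnorm := jacobiSum_mul_jacobiSum_inv hchar h1 h1 h2
  rw [jacobiSum_inv_inv, hJ'] at hnorm
  simp only [star_add, star_mul', star_intCast, star_ofNat, Complex.star_def, Complex.conj_I]
    at hnorm
  have hcast : (((2 * n - 1) ^ 2 + 4 * (-m) ^ 2 : ℤ) : ℂ) = ((Fintype.card F : ℤ) : ℂ) := by
    push_cast at hnorm ⊢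
    linear_combination hnorm + 4 * (m : ℂ) ^ 2 * Complex.I_sq
  exact_mod_cast hcast

lemma exists_gaussSum_sq_of_orderOf_eq_four (ψ : AddChar F ℂ) (hχ : orderOf χ = 4) :
    ∃ α y : ℤ, α ^ 2 + 4 * y ^ 2 = Fintype.card F ∧
      gaussSum χ ψ ^ 2 = gaussSum (χ ^ 2) ψ * (α + 2 * y * I) ∧
      gaussSum χ⁻¹ ψ ^ 2 = gaussSum (χ ^ 2) ψ * (α - 2 * y * I) := by
  obtain ⟨α, y, hJ, hcard⟩ := exists_jacobiSum_eq_of_orderOf_eq_four hχ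
  have h2 : χ ^ 2 ≠ 1 := pow_ne_one_of_lt_orderOf two_ne_zero (by omega)
  have hinv := inv_sq_eq_sq_of_orderOf_eq_four hχ
  have hJ' : jacobiSum χ⁻¹ χ⁻¹ = α - 2 * y * I := by
    rw [jacobiSum_inv_inv, hJ]
    simp [sub_eq_add_neg]
  refine ⟨α, y, hcard, ?_, ?_⟩
  · rw [sq, sq χ, ← jacobiSum_mul_nontrivial (sq χ ▸ h2), hJ]
  · rw [← hinv, sq, sq χ⁻¹, ← jacobiSum_mul_nontrivial (sq χ⁻¹ ▸ hinv ▸ h2), hJ']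

lemma exists_sq_gaussSum_add_gaussSum_inv_eq (hχ : orderOf χ = 4) (hneg : χ (-1) = -1)
    (hψ : ψ.IsPrimitive) :
    ∃ α y : ℤ, α ^ 2 + 4 * y ^ 2 = Fintype.card F ∧ ∀ i : ℕ,
      (((1 - I) * I ^ (3 * i) * gaussSum χ ψ + (1 + I) * I ^ i * gaussSum χ⁻¹ ψ) / 2) ^ 2 =
        -Fintype.card F + (-1) ^ i * 2 * y * gaussSum (χ ^ 2) ψ := by
  have h1 : χ ≠ 1 := orderOf_eq_one_iff.not.1 (by omega)
  obtain ⟨α, y, hcard, hg, hg'⟩ := exists_gaussSum_sq_of_orderOf_eq_four ψ hχ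
  have hgg := gaussSum_mul_gaussSum_inv h1 hψ
  rw [hneg] at hgg
  refine ⟨α, y, hcard, fun i => ?_⟩
  have hI2 : (I ^ i) ^ 2 = (-1) ^ i := by rw [← pow_mul, mul_comm, pow_mul, Complex.I_sq]
  have hI3 : I ^ (3 * i) = (-1) ^ i * I ^ i := by rw [← hI2, ← pow_succ, ← pow_mul, mul_comm]
  have hε : ((-1 : ℂ) ^ i) ^ 2 = 1 := by rw [← pow_mul, mul_comm, pow_mul, neg_one_sq, one_pow]
  rw [hI3]
  generalize gaussSum χ ψ = g at *
  generalize gaussSum χ⁻¹ ψ = g' at *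
  generalize gaussSum (χ ^ 2) ψ = s at *
  generalize (-1 : ℂ) ^ i = ε at *
  generalize I ^ i = w at *
  linear_combination
    ((1 - I) ^ 2 * ε ^ 2 * g ^ 2 + (1 + I) ^ 2 * g' ^ 2 + 2 * (1 - I ^ 2) * ε * g * g') / 4 * hI2
      + ((1 - I) ^ 2 * ε * g ^ 2 + 2 * (1 - I ^ 2) * g * g') / 4 * hε
      + (ε * g ^ 2 + ε * g' ^ 2 - 2 * g * g' - 8 * y * ε * s) / 4 * Complex.I_sq
      - I * ε / 2 * hg + I * ε / 2 * hg' + hgg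

end QuarticCharacters

section Evaluation

open Complex (I)
open Polynomial

/-- The polynomial of degree less than `p` whose coefficients are `f 0, …, f (p - 1)`; its value at
`4` is the number `U(4)` that enters the 4-adic complexity, its values at the complex `p`-th roots
of unity are the discrete Fourier transform of `f`. -/
noncomputable def seqPoly (p : ℕ) (f : ℕ → ℤ) : ℤ[X] := ∑ t ∈ range p, C (f t) * X ^ t

lemma aeval_seqPoly {R : Type*} [CommRing R] (p : ℕ) (f : ℕ → ℤ) (ζ : R) :
    aeval ζ (seqPoly p f) = ∑ t ∈ range p, (f t : R) * ζ ^ t := by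
  simp [seqPoly]

lemma eval_four_seqPoly (p : ℕ) (u : ℕ → ℕ) :
    (seqPoly p fun t => u t).eval 4 = seqVal p u := by
  simp [seqPoly, seqVal, eval_finsetSum]

lemma geomSum_dvd_eval_of_aeval_eq_zero {K : Type*} [Field K] [CharZero K] {p : ℕ} (hp : p.Prime)
    {ζ : K} (hζ : IsPrimitiveRoot ζ p) {P : ℤ[X]} (hP : aeval ζ P = 0) (b : ℤ) :
    ∑ i ∈ range p, b ^ i ∣ P.eval b := by
  have := Fact.mk hp
  have hdvd : cyclotomic p ℤ ∣ P := by
    rw [cyclotomic_eq_minpoly hζ hp.pos]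
    exact minpoly.isIntegrallyClosed_dvd (hζ.isIntegral hp.pos) hP
  simpa [cyclotomic_prime, eval_finsetSum] using eval_dvd (x := b) hdvd

/- With `s`, `t` the values of `S`, `T` at `ζ`, the relations make
`(-3 - s + 2 * t) * (-3 - s - 2 * t)` equal to `9 + 5 * p + (6 - 8 * y) * s`, whose norm from `ℚ(s)`
is `quarticNorm p y`. -/
lemma dvd_quarticNorm_of_dvd_eval {K : Type*} [Field K] [CharZero K] {p : ℕ} (hp : p.Prime)
    {ζ : K} (hζ : IsPrimitiveRoot ζ p) {U S T : ℤ[X]} {y b d : ℤ}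
    (hS : aeval ζ S ^ 2 = (p : K)) (hT : aeval ζ T ^ 2 = -(p : K) + 2 * y * aeval ζ S)
    (hU : 2 * aeval ζ U = -3 + 2 * aeval ζ T - aeval ζ S)
    (hd : d ∣ ∑ i ∈ range p, b ^ i) (hdU : d ∣ U.eval b) : d ∣ quarticNorm p y := by
  let V : ℤ[X] := 2 * (-3 - S - 2 * T) * (C (9 + 5 * p : ℤ) - C (6 - 8 * y) * S)
  have hzero : aeval ζ (U * V - C (quarticNorm p y)) = 0 := by
    simp only [V, quarticNorm, map_sub, map_mul, map_neg, map_add, map_ofNat, map_pow,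
      map_natCast, eq_intCast, map_intCast]
    linear_combination
      (-3 - aeval ζ S - 2 * aeval ζ T) * (9 + 5 * p - (6 - 8 * y) * aeval ζ S) * hU
        + (9 + 5 * p - (6 - 8 * y) * aeval ζ S) * (hS - 4 * hT) - (6 - 8 * y) ^ 2 * hS
  have heval := hd.trans (geomSum_dvd_eval_of_aeval_eq_zero hp hζ hzero b)
  rw [eval_sub, eval_mul, eval_C] at heval
  exact (dvd_sub_right (hdU.mul_right _)).1 heval

lemma mulChar_natCast_pow_mod {p θ : ℕ} {R : Type*} [CommMonoidWithZero R]
    (χ : MulChar (ZMod p) R) (n : ℕ) : χ ((θ ^ n % p : ℕ) : ZMod p) = χ θ ^ n := by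
  rw [ZMod.natCast_mod, Nat.cast_pow, map_pow]

lemma gaussSum_zmodChar {n : ℕ} [NeZero n] {R : Type*} [CommRing R] {ζ : R}
    (χ : MulChar (ZMod n) R) (hζ : ζ ^ n = 1) :
    gaussSum χ (AddChar.zmodChar n hζ) = ∑ t ∈ range n, χ t * ζ ^ t := by
  symm
  refine sum_bij' (fun t _ => (t : ZMod n)) (fun a _ => a.val) (fun _ _ => mem_univ _)
    (fun a _ => mem_range.2 (ZMod.val_lt a)) ?_ (fun a _ => ZMod.natCast_zmod_val a) ?_
  · exact fun t ht => ZMod.val_cast_of_lt (mem_range.1 ht)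
  · exact fun t _ => by rw [AddChar.zmodChar_apply']

variable {p θ : ℕ} [Fact p.Prime] {χ : MulChar (ZMod p) ℂ} {ζ : ℂ}

lemma halfSign_eq_mulChar_add_mulChar_inv (hθ : IsPrimitiveRoot (θ : ZMod p) (p - 1))
    (h4 : 4 ∣ p - 1) (hχ : χ θ = I) (i : ℕ) {t : ℕ} (ht : t < p) :
    (halfSign p θ i t : ℂ) = ((1 - I) * I ^ (3 * i) * χ t + (1 + I) * I ^ i * χ⁻¹ t) / 2 := by
  rcases eq_or_ne t 0 with rfl | ht0
  · simp [MulChar.map_zero]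
  obtain ⟨n, rfl⟩ := exists_pow_mod_eq hθ ht0 ht
  have hI : I ^ i = (I ^ (3 * i))⁻¹ := by
    refine eq_inv_of_mul_eq_one_left ?_
    rw [← pow_add, show i + 3 * i = 4 * i by ring, pow_mul, Complex.I_pow_four, one_pow]
  rw [halfSign_pow_mod hθ h4, MulChar.inv_apply_eq_inv', mulChar_natCast_pow_mod, hχ, hI,
    mul_assoc, mul_assoc, ← mul_inv, ← pow_add, add_comm (3 * i), Complex.I_pow_eq_pow_mod]
  have hlt := Nat.mod_lt (n + 3 * i) four_pos
  generalize (n + 3 * i) % 4 = r at hlt ⊢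
  interval_cases r
  · norm_num
  · norm_num
    linear_combination Complex.I_sq
  · norm_num
    ring
  · norm_num [Complex.I_pow_three]
    linear_combination -Complex.I_sq

lemma exists_halfSign_mul_halfSign_eq_mulChar_sq (hθ : IsPrimitiveRoot (θ : ZMod p) (p - 1))
    (h4 : 4 ∣ p - 1) (hχ : χ θ = I) {i j : ℕ} (hij : Odd (i + j)) :
    ∃ ε : ℤ, ε ^ 2 = 1 ∧
      ∀ t < p, ((halfSign p θ i t * halfSign p θ j t : ℤ) : ℂ) = ε * (χ ^ 2) t := by
  obtain ⟨ε, hε, hmul⟩ := exists_halfSign_mul_halfSign_pow_mod hθ h4 hij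
  refine ⟨ε, hε, fun t ht => ?_⟩
  rw [MulChar.pow_apply' χ two_ne_zero]
  rcases eq_or_ne t 0 with rfl | ht0
  · simp [MulChar.map_zero]
  obtain ⟨n, rfl⟩ := exists_pow_mod_eq hθ ht0 ht
  rw [hmul, mulChar_natCast_pow_mod, hχ, pow_right_comm, Complex.I_sq]
  push_cast
  rfl

lemma aeval_seqPoly_halfSign (hθ : IsPrimitiveRoot (θ : ZMod p) (p - 1)) (h4 : 4 ∣ p - 1)
    (hχ : χ θ = I) (hζ : ζ ^ p = 1) (i : ℕ) :
    aeval ζ (seqPoly p (halfSign p θ i)) =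
      ((1 - I) * I ^ (3 * i) * gaussSum χ (AddChar.zmodChar p hζ)
        + (1 + I) * I ^ i * gaussSum χ⁻¹ (AddChar.zmodChar p hζ)) / 2 := by
  rw [aeval_seqPoly, gaussSum_zmodChar, gaussSum_zmodChar, mul_sum, mul_sum,
    ← sum_add_distrib, sum_div]
  refine sum_congr rfl fun t ht => ?_
  rw [halfSign_eq_mulChar_add_mulChar_inv hθ h4 hχ i (mem_range.1 ht)]
  ring

lemma two_mul_aeval_seqPoly_graySeq (hθ : IsPrimitiveRoot (θ : ZMod p) (p - 1))
    (hζ : IsPrimitiveRoot ζ p) (i j : ℕ) :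
    2 * aeval ζ (seqPoly p fun t => graySeq (halfSeq p θ i) (halfSeq p θ j) t) =
      -3 + 2 * aeval ζ (seqPoly p (halfSign p θ i))
        - aeval ζ (seqPoly p fun t => halfSign p θ i t * halfSign p θ j t) := by
  have hp : p.Prime := Fact.out
  have hgeom : ∑ t ∈ range p, ζ ^ t = 0 := hζ.geom_sum_eq_zero hp.one_lt
  have hdelta : ∑ t ∈ range p, (if t = 0 then 1 else 0) * ζ ^ t = 1 := by simp [hp.pos]
  calc
    _ = 3 * ∑ t ∈ range p, ζ ^ t - 3 * ∑ t ∈ range p, (if t = 0 then 1 else 0) * ζ ^ t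
        + 2 * aeval ζ (seqPoly p (halfSign p θ i))
        - aeval ζ (seqPoly p fun t => halfSign p θ i t * halfSign p θ j t) := by
      simp only [aeval_seqPoly, mul_sum, ← sum_sub_distrib, ← sum_add_distrib]
      refine sum_congr rfl fun t _ => ?_
      have h := congrArg (Int.cast : ℤ → ℂ) (two_mul_graySeq_halfSeq hθ i j t)
      push_cast at h ⊢
      linear_combination ζ ^ t * h
    _ = _ := by
      rw [hgeom, hdelta]
      ring

lemma exists_aeval_seqPoly_halfSign_sq (hp8 : p % 8 = 5)
    (hθ : IsPrimitiveRoot (θ : ZMod p) (p - 1)) (hζ : IsPrimitiveRoot ζ p) {i j : ℕ}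
    (hij : Odd (i + j)) :
    ∃ α y : ℤ, α ^ 2 + 4 * y ^ 2 = p ∧
      aeval ζ (seqPoly p fun t => halfSign p θ i t * halfSign p θ j t) ^ 2 = (p : ℂ) ∧
      aeval ζ (seqPoly p (halfSign p θ i)) ^ 2 = -(p : ℂ)
        + 2 * y * aeval ζ (seqPoly p fun t => halfSign p θ i t * halfSign p θ j t) := by
  have h4 : 4 ∣ p - 1 := by omega
  have hθ' : IsPrimitiveRoot (θ : ZMod p) (Fintype.card (ZMod p) - 1) := by rwa [ZMod.card]
  obtain ⟨χ, hχ⟩ := exists_mulChar_apply_eq_I hθ' (by rwa [ZMod.card])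
  have hχ4 : orderOf χ = 4 := by rw [orderOf_mulChar_eq_orderOf_apply hθ', hχ, orderOf_I]
  have hneg := mulChar_neg_one_of_apply_eq_I hθ' (by rwa [ZMod.card]) hχ
  obtain ⟨ε, hε, hprod⟩ := exists_halfSign_mul_halfSign_eq_mulChar_sq hθ h4 hχ hij
  have hε' : (ε : ℂ) ^ 2 = 1 := by exact_mod_cast hε
  set ψ := AddChar.zmodChar p hζ.pow_eq_one with hψ_def
  have hψ : ψ.IsPrimitive := AddChar.zmodChar_primitive_of_primitive_root p hζ
  have hS : aeval ζ (seqPoly p fun t => halfSign p θ i t * halfSign p θ j t) =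
      ε * gaussSum (χ ^ 2) ψ := by
    rw [aeval_seqPoly, hψ_def, gaussSum_zmodChar, mul_sum]
    exact sum_congr rfl fun t ht => by rw [hprod t (mem_range.1 ht), mul_assoc]
  have hs := gaussSum_sq_sq_of_orderOf_eq_four hχ4 hψ
  obtain ⟨α, y, hαy, hsq⟩ := exists_sq_gaussSum_add_gaussSum_inv_eq hχ4 hneg hψ
  rw [ZMod.card] at hs hαy hsq
  have hy : ((-1) ^ i * ε * y) ^ 2 = y ^ 2 := by
    rw [mul_pow, mul_pow, hε, pow_right_comm, neg_one_sq, one_pow, one_mul, one_mul]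
  refine ⟨α, (-1) ^ i * ε * y, by rw [hy, hαy], ?_, ?_⟩
  · rw [hS, mul_pow, hε', one_mul, hs]
  · rw [aeval_seqPoly_halfSign hθ h4 hχ hζ.pow_eq_one, hS, hsq]
    push_cast
    linear_combination -2 * (-1) ^ i * y * gaussSum (χ ^ 2) ψ * hε'

end Evaluation

section Complexity

variable {p θ : ℕ}

theorem gcd_geomSum_seqVal_graySeq_halfSeq_le (hp : p.Prime) (hp8 : p % 8 = 5)
    (hθ : IsPrimitiveRoot (θ : ZMod p) (p - 1)) {i j : ℕ} (hij : Odd (i + j)) :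
    Nat.gcd (∑ i ∈ range p, 4 ^ i) (seqVal p (graySeq (halfSeq p θ i) (halfSeq p θ j))) ≤
      1 + 2 * p := by
  have := Fact.mk hp
  have hζ := Complex.isPrimitiveRoot_exp p hp.ne_zero
  obtain ⟨α, y, hαy, hS, hT⟩ := exists_aeval_seqPoly_halfSign_sq hp8 hθ hζ hij
  have hU := two_mul_aeval_seqPoly_graySeq hθ hζ i j
  refine le_of_dvd_geomSum_of_dvd_quarticNorm hp hp8 hαy (Nat.gcd_dvd_left _ _) ?_
  refine dvd_quarticNorm_of_dvd_eval (b := 4) hp hζ hS hT hU ?_ ?_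
  · exact_mod_cast Nat.gcd_dvd_left _ _
  · rw [eval_four_seqPoly]
    exact Int.natCast_dvd_natCast.2 (Nat.gcd_dvd_right _ _)

lemma seqVal_seqCompl_add_seqVal (i j : ℕ) :
    seqVal p (graySeq (seqCompl (halfSeq p θ i)) (halfSeq p θ j))
      + seqVal p (graySeq (halfSeq p θ i) (halfSeq p θ j)) = 3 * ∑ i ∈ range p, 4 ^ i := by
  simp only [seqVal, ← sum_add_distrib, ← add_mul, graySeq_seqCompl_halfSeq_add_graySeq, mul_sum]

lemma gcd_geomSum_seqVal_seqCompl (i j : ℕ) :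
    Nat.gcd (∑ i ∈ range p, 4 ^ i)
        (seqVal p (graySeq (seqCompl (halfSeq p θ i)) (halfSeq p θ j))) =
      Nat.gcd (∑ i ∈ range p, 4 ^ i) (seqVal p (graySeq (halfSeq p θ i) (halfSeq p θ j))) := by
  have hsum (d : ℕ) (hd : d ∣ ∑ i ∈ range p, 4 ^ i) :
      d ∣ seqVal p (graySeq (seqCompl (halfSeq p θ i)) (halfSeq p θ j))
        + seqVal p (graySeq (halfSeq p θ i) (halfSeq p θ j)) :=
    seqVal_seqCompl_add_seqVal (p := p) i j ▸ hd.mul_left 3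
  refine Nat.dvd_antisymm ?_ ?_ <;> refine Nat.dvd_gcd (Nat.gcd_dvd_left _ _) ?_
  · exact (Nat.dvd_add_right (Nat.gcd_dvd_right _ _)).1 (hsum _ (Nat.gcd_dvd_left _ _))
  · exact (Nat.dvd_add_left (Nat.gcd_dvd_right _ _)).1 (hsum _ (Nat.gcd_dvd_left _ _))

lemma floor_logb_le_adicComplexity4 {u : ℕ → ℕ} {c : ℕ} (hp : 0 < p)
    (hgcd : Nat.gcd (∑ i ∈ range p, 4 ^ i) (seqVal p u) ≤ c) :
    ⌊Real.logb 4 (((4 ^ p - 1 : ℕ) : ℝ) / (3 * c) + 1)⌋ ≤ adicComplexity4 p u := by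
  have hsum_pos : 0 < ∑ i ∈ range p, 4 ^ i := sum_pos (fun _ _ => by positivity) ⟨0, by simpa⟩
  have hle : Nat.gcd (4 ^ p - 1) (seqVal p u) ≤ 3 * c := by
    rw [← three_mul_geomSum_four]
    have hpos : 0 < 3 * Nat.gcd (∑ i ∈ range p, 4 ^ i) (seqVal p u) := by positivity
    refine (Nat.le_of_dvd hpos ?_).trans (Nat.mul_le_mul_left 3 hgcd)
    exact Nat.gcd_mul_left 3 _ _ ▸ Nat.gcd_dvd_gcd_of_dvd_right _ (Dvd.intro_left 3 rfl)
  have hgcd_pos : (0 : ℝ) < Nat.gcd (4 ^ p - 1) (seqVal p u) := by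
    rw [← three_mul_geomSum_four]
    positivity
  refine Int.floor_le_floor (Real.logb_le_logb_of_le (by norm_num) (by positivity) ?_)
  gcongr
  exact_mod_cast hle

end Complexity

theorem theorem2_general {p θ : ℕ} (hp : p.Prime) (hp8 : p % 8 = 5)
    (hθ : IsPrimitiveRoot (θ : ZMod p) (p - 1)) {i j : ℕ} (hij : Odd (i + j)) :
    ⌊Real.logb 4 (((4 ^ p - 1 : ℕ) : ℝ) / ((3 * (1 + 2 * (p : ℝ)))) + 1)⌋ ≤
      adicComplexity4 p (graySeq (halfSeq p θ i) (halfSeq p θ j)) ∧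
    ⌊Real.logb 4 (((4 ^ p - 1 : ℕ) : ℝ) / ((3 * (1 + 2 * (p : ℝ)))) + 1)⌋ ≤
      adicComplexity4 p (graySeq (seqCompl (halfSeq p θ i)) (halfSeq p θ j)) := by
  have hgcd := gcd_geomSum_seqVal_graySeq_halfSeq_le hp hp8 hθ hij
  have hgcd' := (gcd_geomSum_seqVal_seqCompl (θ := θ) i j).trans_le hgcd
  have hcast : ((1 + 2 * p : ℕ) : ℝ) = 1 + 2 * p := by push_cast; rfl
  rw [← hcast]
  exact ⟨floor_logb_le_adicComplexity4 hp.pos hgcd, floor_logb_le_adicComplexity4 hp.pos hgcd'⟩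

theorem theorem2
    (p : ℕ) (hp : p.Prime) (hp8 : p % 8 = 5)
    (x y : ℤ) (hx : x % 4 = 1) (hxy : (p : ℤ) = x ^ 2 + 4 * y ^ 2)
    (θ : ℕ) (hθ : IsPrimitiveRoot (θ : ZMod p) (p - 1))
    (hy : 16 * (((cycD p θ 0).filter (fun a => (a + 1) % p ∈ cycD p θ 1)).card : ℤ)
        = (p : ℤ) + 1 + 2 * x - 8 * y)
    :
    ⌊Real.logb 4 (((4 ^ p - 1 : ℕ) : ℝ) / ((3 * (1 + 2 * (p : ℝ)))) + 1)⌋ ≤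
      adicComplexity4 p (graySeq (seqS1 p θ) (seqS2 p θ)) ∧
    ⌊Real.logb 4 (((4 ^ p - 1 : ℕ) : ℝ) / ((3 * (1 + 2 * (p : ℝ)))) + 1)⌋ ≤
      adicComplexity4 p (graySeq (seqCompl (seqS1 p θ)) (seqS2 p θ)) ∧
    ⌊Real.logb 4 (((4 ^ p - 1 : ℕ) : ℝ) / ((3 * (1 + 2 * (p : ℝ)))) + 1)⌋ ≤
      adicComplexity4 p (graySeq (seqCompl (seqS2 p θ)) (seqS4 p θ)) := by
  have := Fact.mk hp
  have hS2 : seqS2 p θ = halfSeq p θ 3 := seqS2_eq_halfSeq hθ (by omega)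
  have h03 := theorem2_general hp hp8 hθ (show Odd (0 + 3) by decide)
  have h32 := theorem2_general hp hp8 hθ (show Odd (3 + 2) by decide)
  rw [hS2]
  exact ⟨h03.1, h03.2, h32.2⟩
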